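/- For any sequence of sets E_1, E_2, … ⊆ P one has C̃_{X,r}(⋃_{j=1}^∞ E_j)^r ≤ Σ_{j=1}^∞ C̃_{X,r}(E_j)^r; that is, the set function C̃_{X,r}(·)^r is countably subadditive. -/

import Mathlib

/-!
Near-optimal admissible pairs `(u j, g j)` for the sets `E j` are combined into the pair
`(⨆ j, v j, ∑' j, g j)`, where `v j = min 1 (u j)⁺`. The truncation to `[0, 1]` neither destroys
admissibility nor increases the norm, keeps `g j` as an upper gradient
(`min_one_toENNReal_le_add`), and prevents the supremum from taking infinite values, at which the
convention `|∞ - ∞| = ∞` would break the upper gradient inequality.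

It remains to know that an `r`-norm is countably `r`-subadditive on nonnegative functions
(`QBFL.nrmE_tsum_rpow_le`), whereas the Riesz–Fischer inequality carries the weights `cc ^ (n + 1)`.
If `∑ ‖f j‖ ^ r < ∞`, the sum `∑ f j` is split into a finite part, estimated by the `r`-triangle
inequality, and a remainder cut into consecutive finite blocks. The `r`-triangle inequality bounds
the `k`-th block by a tail of the convergent series, so the cutting points can be chosen to make
the block norms decay faster than the weights grow; Riesz–Fischer then makes the norm of the
remainder as small as desired.
-/

open MeasureTheory Filter Set Topology Metric ENNReal

noncomputable section

/-- A (non-constant, rectifiable) curve in `P`, parametrized by arc length. -/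
structure Curve (P : Type*) [PseudoMetricSpace P] where
  len : ℝ
  len_pos : 0 < len
  toFun : ℝ → P
  lip : LipschitzOnWith 1 toFun (Set.Icc 0 len)

variable {P : Type*}

/-- The curve integral `∫_γ ρ ds`. -/
def curveLint [PseudoMetricSpace P] (γ : Curve P) (ρ : P → ℝ≥0∞) : ℝ≥0∞ :=
  ∫⁻ t in Set.Icc (0 : ℝ) γ.len, ρ (γ.toFun t)

/-- `g` is an upper gradient of `u`. -/
def IsUpperGradient [PseudoMetricSpace P] [MeasurableSpace P]
    (u : P → EReal) (g : P → ℝ≥0∞) : Prop :=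
  Measurable g ∧
    ∀ γ : Curve P, (u (γ.toFun 0) - u (γ.toFun γ.len)).abs ≤ curveLint γ g

/-- A quasi-Banach function lattice over `(P, μ)` with continuous quasi-norm. -/
structure QBFL (P : Type*) [MeasurableSpace P] (μ : MeasureTheory.Measure P) where
  nrm : (P → EReal) → ℝ≥0∞
  cc : ℝ≥0∞
  one_le_cc : 1 ≤ cc
  cc_lt_top : cc < ⊤
  nrm_eq_zero_iff : ∀ u : P → EReal, Measurable u → (nrm u = 0 ↔ u =ᵐ[μ] 0)
  nrm_smul : ∀ (a : ℝ) (u : P → EReal),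
    nrm (fun x => (a : EReal) * u x) = ENNReal.ofReal |a| * nrm u
  nrm_triangle : ∀ u v : P → EReal,
    nrm (fun x => u x + v x) ≤ cc * (nrm u + nrm v)
  nrm_mono : ∀ u v : P → EReal, (∀ᵐ x ∂μ, (u x).abs ≤ (v x).abs) → nrm u ≤ nrm v
  nrm_rieszFischer : ∀ f : ℕ → P → EReal, (∀ n, ∀ᵐ x ∂μ, 0 ≤ f n x) →
    nrm (fun x => ∑' n, f n x) ≤ ∑' n, cc ^ (n + 1) * nrm (f n)
  nrm_continuous : ∀ (f : ℕ → P → EReal) (u : P → EReal),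
    Tendsto (fun n => nrm fun x => f n x - u x) atTop (𝓝 0) →
    Tendsto (fun n => nrm (f n)) atTop (𝓝 (nrm u))

variable [MetricSpace P] [MeasurableSpace P] {μ : MeasureTheory.Measure P}

/-- The quasi-norm applied to a `ℝ≥0∞`-valued function. -/
def QBFL.nrmE (X : QBFL P μ) (g : P → ℝ≥0∞) : ℝ≥0∞ :=
  X.nrm fun x => (g x : EReal)

/-- The Newtonian quasi-seminorm `‖u‖_{N¹X}`. -/
def QBFL.newt (X : QBFL P μ) (u : P → EReal) : ℝ≥0∞ :=
  X.nrm u + ⨅ g ∈ {g : P → ℝ≥0∞ | IsUpperGradient u g}, X.nrmE g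

/-- Membership in the Newtonian space `N¹X`. -/
def QBFL.memN1 (X : QBFL P μ) (u : P → EReal) : Prop :=
  Measurable u ∧ X.newt u < ⊤

/-- The Sobolev capacity `C_X`. -/
def QBFL.cap (X : QBFL P μ) (E : Set P) : ℝ≥0∞ :=
  ⨅ u ∈ {u : P → EReal | X.memN1 u ∧ ∀ x ∈ E, 1 ≤ u x}, X.newt u


/-- The Sobolev capacity `C̃_{X,r}`. -/
def QBFL.capR (X : QBFL P μ) (r : ℝ) (E : Set P) : ℝ≥0∞ :=
  ⨅ q ∈ {q : (P → EReal) × (P → ℝ≥0∞) |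
      Measurable q.1 ∧ (∀ x ∈ E, 1 ≤ q.1 x) ∧ IsUpperGradient q.1 q.2},
    (X.nrm q.1 ^ r + X.nrmE q.2 ^ r) ^ (1 / r)

/-- `‖·‖_X` is an `r`-norm. -/
def QBFL.IsRNorm (X : QBFL P μ) (r : ℝ) : Prop :=
  ∀ u v : P → EReal, X.nrm (fun x => u x + v x) ^ r ≤ X.nrm u ^ r + X.nrm v ^ r

/-! ### The norm of nonnegative functions -/

section Norm

variable {P : Type*} [MeasurableSpace P] {μ : MeasureTheory.Measure P}

lemma EReal_coe_ennreal_tsum (f : ℕ → ℝ≥0∞) :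
    ((∑' n, f n : ℝ≥0∞) : EReal) = ∑' n, (f n : EReal) := by
  let φ : ℝ≥0∞ →+ EReal :=
    { toFun := fun x => (x : EReal)
      map_zero' := rfl
      map_add' := EReal.coe_ennreal_add }
  exact (ENNReal.summable (f := f)).map_tsum φ continuous_coe_ennreal_ereal

lemma EReal_abs_coe_ennreal (a : ℝ≥0∞) : (a : EReal).abs = a := by
  induction a with
  | top => rfl
  | coe a =>
    change ENNReal.ofReal |(a : ℝ)| = a
    rw [abs_of_nonneg (NNReal.coe_nonneg a), ENNReal.ofReal_coe_nnreal]

lemma QBFL.nrmE_mono (X : QBFL P μ) {f g : P → ℝ≥0∞} (h : ∀ x, f x ≤ g x) :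
    X.nrmE f ≤ X.nrmE g := by
  refine X.nrm_mono _ _ (Eventually.of_forall fun x => ?_)
  simpa only [EReal_abs_coe_ennreal] using h x

lemma QBFL.nrmE_zero (X : QBFL P μ) : X.nrmE (fun _ => 0) = 0 := by
  refine (X.nrm_eq_zero_iff _ measurable_const).2 (Eventually.of_forall fun x => rfl)

lemma QBFL.nrmE_add_rpow_le (X : QBFL P μ) {r : ℝ} (hrn : X.IsRNorm r) (f g : P → ℝ≥0∞) :
    X.nrmE (fun x => f x + g x) ^ r ≤ X.nrmE f ^ r + X.nrmE g ^ r := by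
  have h := hrn (fun x => (f x : EReal)) (fun x => (g x : EReal))
  simpa only [QBFL.nrmE, EReal.coe_ennreal_add] using h

lemma QBFL.nrmE_sum_rpow_le (X : QBFL P μ) {r : ℝ} (hr0 : 0 < r) (hrn : X.IsRNorm r)
    (f : ℕ → P → ℝ≥0∞) (s : Finset ℕ) :
    X.nrmE (fun x => ∑ j ∈ s, f j x) ^ r ≤ ∑ j ∈ s, X.nrmE (f j) ^ r := by
  classical
  induction s using Finset.induction_on with
  | empty => simp [X.nrmE_zero, hr0]
  | insert a s ha ih =>
    simp only [Finset.sum_insert ha]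
    exact (X.nrmE_add_rpow_le hrn _ _).trans (by gcongr)

lemma QBFL.nrmE_tsum_le (X : QBFL P μ) (f : ℕ → P → ℝ≥0∞) :
    X.nrmE (fun x => ∑' n, f n x) ≤ ∑' n, X.cc ^ (n + 1) * X.nrmE (f n) := by
  have h := X.nrm_rieszFischer (fun n x => (f n x : EReal))
    (fun n => Eventually.of_forall fun x => EReal.coe_ennreal_nonneg _)
  simpa only [QBFL.nrmE, EReal_coe_ennreal_tsum] using h

/-- A series of nonnegative terms split at `φ 0` and then cut into blocks at the points `φ k`. -/
lemma tsum_le_sum_add_tsum_blocks (a : ℕ → ℝ≥0∞) {φ : ℕ → ℕ} (hφ : StrictMono φ) :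
    ∑' j, a j ≤ ∑ j ∈ Finset.range (φ 0), a j
      + ∑' k, ∑ j ∈ Finset.Ico (φ k) (φ (k + 1)), a j := by
  have key : ∀ N, ∑ j ∈ Finset.range (φ N), a j = ∑ j ∈ Finset.range (φ 0), a j
      + ∑ k ∈ Finset.range N, ∑ j ∈ Finset.Ico (φ k) (φ (k + 1)), a j := by
    intro N
    induction N with
    | zero => simp
    | succ N ih =>
      rw [Finset.sum_range_succ, ← add_assoc, ← ih,
        Finset.sum_range_add_sum_Ico _ (hφ (Nat.lt_succ_self N)).le]
  rw [ENNReal.tsum_eq_iSup_nat]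
  refine iSup_le fun N => ?_
  calc ∑ j ∈ Finset.range N, a j ≤ ∑ j ∈ Finset.range (φ N), a j :=
        Finset.sum_le_sum_of_subset (Finset.range_mono hφ.le_apply)
    _ ≤ _ := by
        rw [key N]
        gcongr
        exact ENNReal.sum_le_tsum _

/-- Countable `r`-subadditivity of an `r`-norm on nonnegative functions. -/
lemma QBFL.nrmE_tsum_rpow_le (X : QBFL P μ) {r : ℝ} (hr0 : 0 < r) (hrn : X.IsRNorm r)
    (f : ℕ → P → ℝ≥0∞) :
    X.nrmE (fun x => ∑' j, f j x) ^ r ≤ ∑' j, X.nrmE (f j) ^ r := by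
  refine ENNReal.le_of_forall_pos_le_add fun ε hε hfin => ?_
  have hη : ((ε : ℝ≥0∞) ^ (1 / r)) ≠ 0 := by
    rw [Ne, ENNReal.rpow_eq_zero_iff]
    simp [hε.ne']
  obtain ⟨e, he0, he⟩ := ENNReal.exists_pos_sum_of_countable' hη ℕ
  -- `δ k` is the size allowed for the `k`-th block, compensating the weight `cc ^ (k + 1)`.
  let δ : ℕ → ℝ≥0∞ := fun k => e k / X.cc ^ (k + 1)
  have hδ0 : ∀ k, 0 < δ k := fun k =>
    ENNReal.div_pos (he0 k).ne' (ENNReal.pow_ne_top X.cc_lt_top.ne)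
  have hev : ∀ k, ∀ᶠ n in atTop, ∑' j, X.nrmE (f (j + n)) ^ r < δ k ^ r := fun k =>
    (ENNReal.tendsto_sum_nat_add (fun j => X.nrmE (f j) ^ r) hfin.ne).eventually
      (gt_mem_nhds (ENNReal.rpow_pos_of_nonneg (hδ0 k) hr0.le))
  obtain ⟨φ, hφ, hφδ⟩ := Filter.extraction_forall_of_eventually hev
  have hblock : ∀ k,
      X.nrmE (fun x => ∑ j ∈ Finset.Ico (φ k) (φ (k + 1)), f j x) ≤ δ k := by
    intro k
    rw [← ENNReal.rpow_le_rpow_iff hr0]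
    refine (X.nrmE_sum_rpow_le hr0 hrn f _).trans (le_trans ?_ (hφδ k).le)
    rw [Finset.sum_Ico_eq_sum_range]
    simp only [add_comm (φ k)]
    exact ENNReal.sum_le_tsum _
  have htail : X.nrmE (fun x => ∑' k, ∑ j ∈ Finset.Ico (φ k) (φ (k + 1)), f j x)
      ≤ (ε : ℝ≥0∞) ^ (1 / r) := by
    refine (X.nrmE_tsum_le _).trans (le_trans ?_ he.le)
    refine ENNReal.tsum_le_tsum fun k => ?_
    calc _ ≤ X.cc ^ (k + 1) * δ k := by gcongr; exact hblock k
      _ ≤ e k := ENNReal.mul_div_le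
  calc X.nrmE (fun x => ∑' j, f j x) ^ r
      ≤ X.nrmE (fun x => ∑ j ∈ Finset.range (φ 0), f j x
          + ∑' k, ∑ j ∈ Finset.Ico (φ k) (φ (k + 1)), f j x) ^ r :=
        ENNReal.rpow_le_rpow
          (X.nrmE_mono fun x => tsum_le_sum_add_tsum_blocks (fun j => f j x) hφ) hr0.le
    _ ≤ _ := X.nrmE_add_rpow_le hrn _ _
    _ ≤ ∑' j, X.nrmE (f j) ^ r + ε := by
        gcongr
        · exact (X.nrmE_sum_rpow_le hr0 hrn f _).trans (ENNReal.sum_le_tsum _)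
        · calc _ ≤ ((ε : ℝ≥0∞) ^ (1 / r)) ^ r := ENNReal.rpow_le_rpow htail hr0.le
            _ = ε := by rw [← ENNReal.rpow_mul, one_div_mul_cancel hr0.ne', ENNReal.rpow_one]

end Norm

/-! ### Truncation and upper gradients -/

lemma toENNReal_le_abs (a : EReal) : a.toENNReal ≤ a.abs := by
  induction a with
  | bot => simp
  | top => simp
  | coe a =>
    rw [EReal.real_coe_toENNReal, EReal.abs_def]
    exact ENNReal.ofReal_le_ofReal (le_abs_self a)

/-- Truncation to `[0, 1]` is a contraction, also under the convention `|±∞ - (±∞)| = ∞`. -/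
lemma min_one_toENNReal_le_add (a b : EReal) :
    min 1 a.toENNReal ≤ min 1 b.toENNReal + (a - b).abs := by
  induction a with
  | bot => simp
  | top => induction b <;> simp
  | coe a =>
    induction b with
    | bot => simp
    | top => simp
    | coe b =>
      rw [← EReal.coe_sub, EReal.abs_def, EReal.real_coe_toENNReal, EReal.real_coe_toENNReal]
      rw [← min_add_add_right]
      refine le_min ((min_le_left _ _).trans le_self_add) ((min_le_right _ _).trans ?_)
      refine le_trans (ENNReal.ofReal_le_ofReal ?_) ENNReal.ofReal_add_le
      linarith [le_abs_self (a - b)]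

lemma EReal_abs_sub_comm (a b : EReal) : (a - b).abs = (b - a).abs := by
  induction a <;> induction b <;> try rfl
  rw [← EReal.coe_sub, ← EReal.coe_sub, EReal.abs_def, EReal.abs_def, abs_sub_comm]

lemma abs_coe_sub_coe_le {p q C : ℝ≥0∞} (hp : p ≠ ⊤) (hq : q ≠ ⊤)
    (h1 : p ≤ q + C) (h2 : q ≤ p + C) : ((p : EReal) - (q : EReal)).abs ≤ C := by
  induction C with
  | top => exact le_top
  | coe c =>
    lift p to NNReal using hp
    lift q to NNReal using hq
    have h1' : (p : ℝ) ≤ q + c := by exact_mod_cast h1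
    have h2' : (q : ℝ) ≤ p + c := by exact_mod_cast h2
    change ENNReal.ofReal |(p : ℝ) - q| ≤ c
    rw [← ENNReal.ofReal_coe_nnreal (p := c)]
    exact ENNReal.ofReal_le_ofReal (abs_le.2 ⟨by linarith, by linarith⟩)

lemma isUpperGradient_iSup_min_one {P : Type*} [MetricSpace P] [MeasurableSpace P]
    {u : ℕ → P → EReal} {g : ℕ → P → ℝ≥0∞} (h : ∀ j, IsUpperGradient (u j) (g j)) :
    IsUpperGradient (fun x => ((⨆ j, min 1 (u j x).toENNReal : ℝ≥0∞) : EReal))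
      (fun x => ∑' j, g j x) := by
  refine ⟨Measurable.tsum fun j => (h j).1, fun γ => ?_⟩
  have hC : ∀ j, (u j (γ.toFun 0) - u j (γ.toFun γ.len)).abs
      ≤ curveLint γ (fun x => ∑' j, g j x) := fun j =>
    ((h j).2 γ).trans (lintegral_mono fun t => ENNReal.le_tsum j)
  have hne : ∀ x, (⨆ j, min 1 (u j x).toENNReal : ℝ≥0∞) ≠ ⊤ := fun x =>
    ne_top_of_le_ne_top ENNReal.one_ne_top (iSup_le fun j => min_le_left _ _)
  have hle : ∀ x y C, (∀ j, (u j x - u j y).abs ≤ C) →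
      (⨆ j, min 1 (u j x).toENNReal : ℝ≥0∞) ≤ (⨆ j, min 1 (u j y).toENNReal) + C := by
    intro x y C hxy
    refine iSup_le fun j => (min_one_toENNReal_le_add _ (u j y)).trans ?_
    exact add_le_add (le_iSup (fun j => min 1 (u j y).toENNReal) j) (hxy j)
  refine abs_coe_sub_coe_le (hne _) (hne _) (hle _ _ _ hC) (hle _ _ _ fun j => ?_)
  rw [EReal_abs_sub_comm]
  exact hC j

/-! ### Countable subadditivity -/

/-- The set function `C̃_{X,r}(·)^r` is countably subadditive. -/
theorem capR_rpow_countably_subadditive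
    {P : Type*} [MetricSpace P] [MeasurableSpace P] [BorelSpace P]
    (μ : MeasureTheory.Measure P) [SigmaFinite μ]
    (hball : ∀ (x : P) (r : ℝ), 0 < r → 0 < μ (Metric.ball x r) ∧ μ (Metric.ball x r) < ⊤)
    (X : QBFL P μ) (r : ℝ) (hr0 : 0 < r) (hr1 : r ≤ 1) (hrn : X.IsRNorm r)
    (E : ℕ → Set P) :
    X.capR r (⋃ j, E j) ^ r ≤ ∑' j, X.capR r (E j) ^ r := by
  refine ENNReal.le_of_forall_pos_le_add fun ε hε hfin => ?_
  obtain ⟨e, he0, he⟩ := ENNReal.exists_pos_sum_of_countable'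
    (ENNReal.coe_ne_zero.2 hε.ne') ℕ
  have hex : ∀ j, ∃ q : (P → EReal) × (P → ℝ≥0∞),
      (Measurable q.1 ∧ (∀ x ∈ E j, 1 ≤ q.1 x) ∧ IsUpperGradient q.1 q.2) ∧
        X.nrm q.1 ^ r + X.nrmE q.2 ^ r < X.capR r (E j) ^ r + e j := by
    intro j
    have hlt : X.capR r (E j) < (X.capR r (E j) ^ r + e j) ^ r⁻¹ := by
      rw [ENNReal.lt_rpow_inv_iff hr0]
      exact ENNReal.lt_add_right (ENNReal.ne_top_of_tsum_ne_top hfin.ne j) (he0 j).ne'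
    conv_lhs at hlt => rw [QBFL.capR]
    simp only [iInf_lt_iff] at hlt
    obtain ⟨q, hq, hlt⟩ := hlt
    rw [one_div, ENNReal.rpow_lt_rpow_iff (inv_pos.2 hr0)] at hlt
    exact ⟨q, hq, hlt⟩
  choose q hq hlt using hex
  let v : ℕ → P → ℝ≥0∞ := fun j x => min 1 ((q j).1 x).toENNReal
  let U : P → EReal := fun x => ((⨆ j, v j x : ℝ≥0∞) : EReal)
  let G : P → ℝ≥0∞ := fun x => ∑' j, (q j).2 x
  have hUm : Measurable U :=
    (Measurable.iSup fun j => measurable_const.min (hq j).1.ereal_toENNReal).coe_ereal_ennreal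
  have hUE : ∀ x ∈ ⋃ j, E j, 1 ≤ U x := by
    intro x hx
    obtain ⟨j, hj⟩ := mem_iUnion.1 hx
    have h1 : (1 : ℝ≥0∞) ≤ ((q j).1 x).toENNReal := by
      have := EReal.toENNReal_le_toENNReal ((hq j).2.1 x hj)
      rwa [← EReal.coe_ennreal_one, EReal.toENNReal_coe] at this
    have h2 : (1 : ℝ≥0∞) ≤ ⨆ j, v j x :=
      (le_min le_rfl h1).trans (le_iSup (fun j => v j x) j)
    rw [← EReal.coe_ennreal_one]
    exact EReal.coe_ennreal_le_coe_ennreal_iff.2 h2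
  have hUG : IsUpperGradient U G := isUpperGradient_iSup_min_one fun j => (hq j).2.2
  have hcap : X.capR r (⋃ j, E j) ^ r ≤ X.nrm U ^ r + X.nrmE G ^ r := by
    rw [← ENNReal.le_rpow_inv_iff hr0, ← one_div]
    exact iInf₂_le (U, G) ⟨hUm, hUE, hUG⟩
  have hvu : ∀ j, X.nrmE (v j) ≤ X.nrm (q j).1 := fun j =>
    X.nrm_mono _ _ (Eventually.of_forall fun x => by
      rw [EReal_abs_coe_ennreal]
      exact (min_le_right _ _).trans (toENNReal_le_abs _))
  have hU : X.nrm U ^ r ≤ ∑' j, X.nrm (q j).1 ^ r :=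
    calc X.nrm U ^ r ≤ X.nrmE (fun x => ∑' j, v j x) ^ r :=
          ENNReal.rpow_le_rpow
            (X.nrmE_mono fun x => iSup_le fun j => ENNReal.le_tsum j) hr0.le
      _ ≤ ∑' j, X.nrmE (v j) ^ r := X.nrmE_tsum_rpow_le hr0 hrn v
      _ ≤ _ := ENNReal.tsum_le_tsum fun j => ENNReal.rpow_le_rpow (hvu j) hr0.le
  calc X.capR r (⋃ j, E j) ^ r ≤ X.nrm U ^ r + X.nrmE G ^ r := hcap
    _ ≤ ∑' j, X.nrm (q j).1 ^ r + ∑' j, X.nrmE (q j).2 ^ r :=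
        add_le_add hU (X.nrmE_tsum_rpow_le hr0 hrn fun j => (q j).2)
    _ = ∑' j, (X.nrm (q j).1 ^ r + X.nrmE (q j).2 ^ r) := ENNReal.tsum_add.symm
    _ ≤ ∑' j, (X.capR r (E j) ^ r + e j) := ENNReal.tsum_le_tsum fun j => (hlt j).le
    _ = ∑' j, X.capR r (E j) ^ r + ∑' j, e j := ENNReal.tsum_add
    _ ≤ ∑' j, X.capR r (E j) ^ r + ε := by gcongr

end
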